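/- Let γ > 1 and let (ρ, m, E, B) be a solution of the monolithic-regularized ideal MHD system on ℝ^d × (0,∞), twice continuously differentiable in space and continuously differentiable in time, with ∇·B = 0, ρ > 0 and e > 0, where u := m/ρ, e := (E − ρ|u|²/2 − |B|²/2)/ρ, and the ideal-gas pressure p = (γ−1)ρe. Let f : ℝ → ℝ be twice continuously differentiable with f' > 0 and f' − γ f'' > 0 everywhere, and set s := ln e − (γ−1) ln ρ. Then the generalized entropy inequality ∂_t(ρ f(s)) + ∇·(u ρ f(s) − ε ρ ∇f(s) − ε f(s) ∇ρ) ≥ 0 holds at every point. -/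

import Mathlib

open scoped BigOperators

/-- Spatial partial derivative `∂_i f (x)` of a scalar field on `ℝ^d`. -/
noncomputable def spd {d : ℕ} (f : (Fin d → ℝ) → ℝ) (i : Fin d) (x : Fin d → ℝ) : ℝ :=
  fderiv ℝ f x (Pi.single i 1)

/-- Laplacian `Δf(x) = ∑ᵢ ∂ᵢ∂ᵢ f (x)` of a scalar field on `ℝ^d`. -/
noncomputable def slap {d : ℕ} (f : (Fin d → ℝ) → ℝ) (x : Fin d → ℝ) : ℝ :=
  ∑ i, spd (spd f i) i x

/-- The Maxwell stress tensor `𝒯 = B ⊗ B − (|B|²/2) I` built from a vector `B ∈ ℝ^d`. -/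
noncomputable def maxwellT {d : ℕ} (B : Fin d → ℝ) (i j : Fin d) : ℝ :=
  B i * B j - (if i = j then (∑ k, (B k) ^ 2) / 2 else 0)

/-- Specific internal energy `e = (E − ρ|u|²/2 − |B|²/2)/ρ` with `u = m/ρ`,
as a space-time field. -/
noncomputable def specE {d : ℕ} (ρ E : (Fin d → ℝ) → ℝ → ℝ)
    (m B : (Fin d → ℝ) → ℝ → Fin d → ℝ) (x : Fin d → ℝ) (t : ℝ) : ℝ :=
  (E x t - ρ x t * (∑ i, (m x t i / ρ x t) ^ 2) / 2 - (∑ i, (B x t i) ^ 2) / 2) / ρ x t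

/-- Ideal-gas specific entropy field `s = ln e − (γ−1) ln ρ`. -/
noncomputable def sField (γ : ℝ) {d : ℕ} (ρ E : (Fin d → ℝ) → ℝ → ℝ)
    (m B : (Fin d → ℝ) → ℝ → Fin d → ℝ) (x : Fin d → ℝ) (t : ℝ) : ℝ :=
  Real.log (specE ρ E m B x t) - (γ - 1) * Real.log (ρ x t)

/-!
Since `ρ∇f(s) + f(s)∇ρ = ∇(ρ f(s))`, the claim reads `Lη + η ∇·u ≥ 0` for `η = ρ f(s)`, where
`L = ∂ₜ + u·∇ − εΔ`. Each conservation law prescribes `L` of one conserved variable, and `L` obeys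
the Leibniz and chain rules up to gradient terms coming from `εΔ`. Subtracting the kinetic and
magnetic energies from the total energy gives `ρ Le = −p ∇·u + ε(D + 2∇ρ·∇e)` with the viscous
heating `D = ρ|∇u|² + |∇B|²`, and the chain rule for `f(ln e − (γ−1) ln ρ)` then yields
`Lη + η ∇·u = ε(f' D/e + ρ Q)`. Here `Q = f'(|Y|² + (γ−1)|X|²) − f''|Y − (γ−1)X|²` with
`X = ∇ ln ρ` and `Y = ∇ ln e`, and the identity
`γQ = (f' − γf'')|Y − (γ−1)X|² + (γ−1) f' |X + Y|²` shows that `Q` is nonnegative.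
-/

/-- Divergence `∇·F (x) = ∑ⱼ ∂ⱼFⱼ (x)` of a vector field on `ℝ^d`. -/
noncomputable def sdiv {d : ℕ} (F : (Fin d → ℝ) → Fin d → ℝ) (x : Fin d → ℝ) : ℝ :=
  ∑ j, spd (fun y => F y j) j x

/-- Pointwise inner product `∇g·∇h (x)` of the gradients of two scalar fields on `ℝ^d`. -/
noncomputable def gradInner {d : ℕ} (g h : (Fin d → ℝ) → ℝ) (x : Fin d → ℝ) : ℝ :=
  ∑ j, spd g j x * spd h j x

/-- A space-time field of class `C^{2,1}`: `C²` in space and `C¹` in time, the regularity of a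
classical solution of a parabolic equation. -/
structure IsC21 {d : ℕ} (g : (Fin d → ℝ) → ℝ → ℝ) : Prop where
  space : ∀ t, ContDiff ℝ 2 fun x => g x t
  time : ∀ x, ContDiff ℝ 1 fun t => g x t

/-- The advection-diffusion operator `∂ₜg + v·∇g − εΔg` at the space-time point `(x, t)`. The
velocity `v` enters only through its value at that point. -/
noncomputable def advDiff {d : ℕ} (ε : ℝ) (v : Fin d → ℝ) (g : (Fin d → ℝ) → ℝ → ℝ)
    (x : Fin d → ℝ) (t : ℝ) : ℝ :=
  deriv (fun τ => g x τ) t + ∑ j, v j * spd (fun y => g y t) j x - ε * slap (fun y => g y t) x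

section SpatialDerivatives

variable {d : ℕ} {g h : (Fin d → ℝ) → ℝ} {x : Fin d → ℝ} {φ : ℝ → ℝ}

theorem spd_const (c : ℝ) (i : Fin d) : spd (fun _ => c) i x = 0 := by
  simp [spd]

theorem spd_add (hg : DifferentiableAt ℝ g x) (hh : DifferentiableAt ℝ h x) (i : Fin d) :
    spd (fun y => g y + h y) i x = spd g i x + spd h i x := by
  simp [spd, fderiv_fun_add hg hh]

theorem spd_sub (hg : DifferentiableAt ℝ g x) (hh : DifferentiableAt ℝ h x) (i : Fin d) :
    spd (fun y => g y - h y) i x = spd g i x - spd h i x := by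
  simp [spd, fderiv_fun_sub hg hh]

theorem spd_const_mul (c : ℝ) (hg : DifferentiableAt ℝ g x) (i : Fin d) :
    spd (fun y => c * g y) i x = c * spd g i x := by
  simp [spd, fderiv_const_mul hg c]

theorem spd_mul (hg : DifferentiableAt ℝ g x) (hh : DifferentiableAt ℝ h x) (i : Fin d) :
    spd (fun y => g y * h y) i x = g x * spd h i x + h x * spd g i x := by
  simp [spd, fderiv_fun_mul hg hh]

theorem spd_sum {ι : Type*} {s : Finset ι} {g : ι → (Fin d → ℝ) → ℝ}
    (hg : ∀ k ∈ s, DifferentiableAt ℝ (g k) x) (i : Fin d) :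
    spd (fun y => ∑ k ∈ s, g k y) i x = ∑ k ∈ s, spd (g k) i x := by
  simp [spd, fderiv_fun_sum hg]

theorem spd_comp (hφ : DifferentiableAt ℝ φ (g x)) (hg : DifferentiableAt ℝ g x) (i : Fin d) :
    spd (fun y => φ (g y)) i x = deriv φ (g x) * spd g i x := by
  have := hφ.hasDerivAt.comp_hasFDerivAt x hg.hasFDerivAt
  simp [spd, show fderiv ℝ (fun y => φ (g y)) x = _ from this.fderiv]

theorem differentiable_spd (hg : ContDiff ℝ 2 g) (i : Fin d) :
    Differentiable ℝ (spd g i) := by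
  have : Differentiable ℝ (fderiv ℝ g) :=
    (hg.fderiv_right (m := 1) (by norm_num)).differentiable one_ne_zero
  unfold spd
  fun_prop

theorem differentiableAt_deriv_of_contDiffAt {y : ℝ} (hφ : ContDiffAt ℝ 2 φ y) :
    DifferentiableAt ℝ (deriv φ) y := by
  have : DifferentiableAt ℝ (fderiv ℝ φ) y :=
    (hφ.fderiv_right (m := 1) (by norm_num)).differentiableAt one_ne_zero
  rw [show deriv φ = fun z => fderiv ℝ φ z 1 from funext fun _ => fderiv_apply_one_eq_deriv.symm]
  fun_prop

theorem slap_add (hg : ContDiff ℝ 2 g) (hh : ContDiff ℝ 2 h) :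
    slap (fun y => g y + h y) x = slap g x + slap h x := by
  have hspd (i : Fin d) : spd (fun y => g y + h y) i = fun y => spd g i y + spd h i y :=
    funext fun y => spd_add (hg.differentiable two_ne_zero y) (hh.differentiable two_ne_zero y) i
  simp only [slap, hspd, ← Finset.sum_add_distrib]
  exact Finset.sum_congr rfl fun i _ =>
    spd_add (differentiable_spd hg i x) (differentiable_spd hh i x) i

theorem slap_sum {ι : Type*} {s : Finset ι} {g : ι → (Fin d → ℝ) → ℝ}
    (hg : ∀ k ∈ s, ContDiff ℝ 2 (g k)) :
    slap (fun y => ∑ k ∈ s, g k y) x = ∑ k ∈ s, slap (g k) x := by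
  have hspd (i : Fin d) : spd (fun y => ∑ k ∈ s, g k y) i = fun y => ∑ k ∈ s, spd (g k) i y :=
    funext fun y => spd_sum (fun k hk => (hg k hk).differentiable two_ne_zero y) i
  simp only [slap, hspd]
  rw [Finset.sum_comm]
  exact Finset.sum_congr rfl fun i _ =>
    spd_sum (fun k hk => differentiable_spd (hg k hk) i x) i

theorem slap_mul (hg : ContDiff ℝ 2 g) (hh : ContDiff ℝ 2 h) :
    slap (fun y => g y * h y) x = g x * slap h x + h x * slap g x + 2 * gradInner g h x := by
  have dg := hg.differentiable two_ne_zero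
  have dh := hh.differentiable two_ne_zero
  have hspd (i : Fin d) :
      spd (fun y => g y * h y) i = fun y => g y * spd h i y + h y * spd g i y :=
    funext fun y => spd_mul (dg y) (dh y) i
  simp only [slap, gradInner, hspd, Finset.mul_sum, ← Finset.sum_add_distrib]
  refine Finset.sum_congr rfl fun i _ => ?_
  have ddg := differentiable_spd hg i x
  have ddh := differentiable_spd hh i x
  rw [spd_add ((dg x).fun_mul ddh) ((dh x).fun_mul ddg), spd_mul (dg x) ddh, spd_mul (dh x) ddg]
  ring

theorem slap_comp (hφ : ∀ y, ContDiffAt ℝ 2 φ (g y)) (hg : ContDiff ℝ 2 g) :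
    slap (fun y => φ (g y)) x =
      deriv φ (g x) * slap g x + deriv (deriv φ) (g x) * gradInner g g x := by
  have dg := hg.differentiable two_ne_zero
  have hspd (i : Fin d) : spd (fun y => φ (g y)) i = fun y => deriv φ (g y) * spd g i y :=
    funext fun y => spd_comp ((hφ y).differentiableAt two_ne_zero) (dg y) i
  simp only [slap, gradInner, hspd, Finset.mul_sum, ← Finset.sum_add_distrib]
  refine Finset.sum_congr rfl fun i _ => ?_
  have dφ := differentiableAt_deriv_of_contDiffAt (hφ x)
  have dφg : DifferentiableAt ℝ (fun y => deriv φ (g y)) x := dφ.comp x (dg x)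
  rw [spd_mul dφg (differentiable_spd hg i x), spd_comp dφ (dg x)]
  ring

theorem gradInner_comm : gradInner g h x = gradInner h g x :=
  Finset.sum_congr rfl fun _ _ => mul_comm _ _

theorem gradInner_self_nonneg : 0 ≤ gradInner g g x :=
  Finset.sum_nonneg fun _ _ => mul_self_nonneg _

theorem gradInner_mul_left {k : (Fin d → ℝ) → ℝ} (hg : DifferentiableAt ℝ g x)
    (hh : DifferentiableAt ℝ h x) :
    gradInner (fun y => g y * h y) k x = g x * gradInner h k x + h x * gradInner g k x := by
  simp only [gradInner, spd_mul hg hh, Finset.mul_sum, ← Finset.sum_add_distrib]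
  exact Finset.sum_congr rfl fun i _ => by ring

theorem gradInner_comp_right (hφ : DifferentiableAt ℝ φ (g x)) (hg : DifferentiableAt ℝ g x) :
    gradInner h (fun y => φ (g y)) x = deriv φ (g x) * gradInner h g x := by
  simp only [gradInner, spd_comp hφ hg, Finset.mul_sum]
  exact Finset.sum_congr rfl fun i _ => by ring

theorem gradInner_log_right (hg : DifferentiableAt ℝ g x) (h0 : g x ≠ 0) :
    gradInner h (fun y => Real.log (g y)) x = gradInner h g x / g x := by
  rw [gradInner_comp_right (Real.differentiableAt_log h0) hg, Real.deriv_log, inv_mul_eq_div]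

theorem sdiv_mul {v : (Fin d → ℝ) → Fin d → ℝ} (hg : DifferentiableAt ℝ g x)
    (hv : ∀ j, DifferentiableAt ℝ (fun y => v y j) x) :
    sdiv (fun y j => v y j * g y) x = g x * sdiv v x + ∑ j, v x j * spd g j x := by
  simp only [sdiv, fun j => spd_mul (hv j) hg j, Finset.mul_sum, ← Finset.sum_add_distrib]
  exact Finset.sum_congr rfl fun j _ => by ring

theorem sdiv_sub {F G : (Fin d → ℝ) → Fin d → ℝ} (hF : ∀ j, DifferentiableAt ℝ (fun y => F y j) x)
    (hG : ∀ j, DifferentiableAt ℝ (fun y => G y j) x) :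
    sdiv (fun y j => F y j - G y j) x = sdiv F x - sdiv G x := by
  simp only [sdiv, fun j => spd_sub (hF j) (hG j) j, Finset.sum_sub_distrib]

theorem sdiv_add {F G : (Fin d → ℝ) → Fin d → ℝ} (hF : ∀ j, DifferentiableAt ℝ (fun y => F y j) x)
    (hG : ∀ j, DifferentiableAt ℝ (fun y => G y j) x) :
    sdiv (fun y j => F y j + G y j) x = sdiv F x + sdiv G x := by
  simp only [sdiv, fun j => spd_add (hF j) (hG j) j, Finset.sum_add_distrib]

theorem sdiv_vecMul {v : (Fin d → ℝ) → Fin d → ℝ} {S : (Fin d → ℝ) → Fin d → Fin d → ℝ}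
    (hv : ∀ k, DifferentiableAt ℝ (fun y => v y k) x)
    (hS : ∀ k j, DifferentiableAt ℝ (fun y => S y k j) x) :
    sdiv (fun y j => ∑ k, v y k * S y k j) x =
      ∑ k, (v x k * sdiv (fun y => S y k) x + ∑ j, S x k j * spd (fun y => v y k) j x) := by
  simp only [sdiv, Finset.mul_sum, ← Finset.sum_add_distrib]
  rw [Finset.sum_comm]
  refine Finset.sum_congr rfl fun j _ => ?_
  rw [spd_sum fun k _ => (hv k).fun_mul (hS k j)]
  exact Finset.sum_congr rfl fun k _ => spd_mul (hv k) (hS k j) j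

theorem sdiv_sub_spd_mul {F : (Fin d → ℝ) → Fin d → ℝ} (ε : ℝ)
    (hF : ∀ j, DifferentiableAt ℝ (fun y => F y j) x) (hg : ContDiff ℝ 2 g)
    (hh : ContDiff ℝ 2 h) :
    sdiv (fun y j => F y j - ε * g y * spd h j y - ε * h y * spd g j y) x =
      sdiv F x - ε * slap (fun y => g y * h y) x := by
  have hflux : (fun y j => F y j - ε * g y * spd h j y - ε * h y * spd g j y) =
      fun y j => F y j - ε * spd (fun z => g z * h z) j y := by
    funext y j
    rw [spd_mul (hg.differentiable two_ne_zero y) (hh.differentiable two_ne_zero y)]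
    ring
  have dgrad (j : Fin d) := differentiable_spd (hg.mul hh) j x
  rw [hflux, sdiv_sub hF fun j => (dgrad j).const_mul ε]
  simp only [sdiv, slap, Finset.mul_sum, fun j => spd_const_mul ε (dgrad j) j]

end SpatialDerivatives

namespace IsC21

variable {d : ℕ} {g h : (Fin d → ℝ) → ℝ → ℝ} {φ : ℝ → ℝ}

theorem differentiable_space (hg : IsC21 g) (t : ℝ) : Differentiable ℝ fun x => g x t :=
  (hg.space t).differentiable two_ne_zero

theorem differentiable_time (hg : IsC21 g) (x : Fin d → ℝ) : Differentiable ℝ fun t => g x t :=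
  (hg.time x).differentiable one_ne_zero

theorem const (c : ℝ) : IsC21 fun (_ : Fin d → ℝ) _ => c :=
  ⟨fun _ => contDiff_const, fun _ => contDiff_const⟩

theorem add (hg : IsC21 g) (hh : IsC21 h) : IsC21 fun x t => g x t + h x t :=
  ⟨fun t => (hg.space t).add (hh.space t), fun x => (hg.time x).add (hh.time x)⟩

theorem sub (hg : IsC21 g) (hh : IsC21 h) : IsC21 fun x t => g x t - h x t :=
  ⟨fun t => (hg.space t).sub (hh.space t), fun x => (hg.time x).sub (hh.time x)⟩

theorem mul (hg : IsC21 g) (hh : IsC21 h) : IsC21 fun x t => g x t * h x t :=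
  ⟨fun t => (hg.space t).mul (hh.space t), fun x => (hg.time x).mul (hh.time x)⟩

theorem pow (hg : IsC21 g) (n : ℕ) : IsC21 fun x t => g x t ^ n :=
  ⟨fun t => (hg.space t).pow n, fun x => (hg.time x).pow n⟩

theorem div (hg : IsC21 g) (hh : IsC21 h) (h0 : ∀ x t, h x t ≠ 0) :
    IsC21 fun x t => g x t / h x t :=
  ⟨fun t => (hg.space t).div (hh.space t) fun x => h0 x t,
    fun x => (hg.time x).div (hh.time x) (h0 x)⟩

theorem sum {ι : Type*} {s : Finset ι} {g : ι → (Fin d → ℝ) → ℝ → ℝ}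
    (hg : ∀ k ∈ s, IsC21 (g k)) : IsC21 fun x t => ∑ k ∈ s, g k x t :=
  ⟨fun t => ContDiff.sum fun k hk => (hg k hk).space t,
    fun x => ContDiff.sum fun k hk => (hg k hk).time x⟩

theorem comp (hφ : ∀ x t, ContDiffAt ℝ 2 φ (g x t)) (hg : IsC21 g) : IsC21 fun x t => φ (g x t) :=
  ⟨fun t => contDiff_iff_contDiffAt.2 fun x => (hφ x t).comp x (hg.space t).contDiffAt,
    fun x => contDiff_iff_contDiffAt.2 fun t =>
      ((hφ x t).of_le one_le_two).comp t (hg.time x).contDiffAt⟩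

theorem log (hg : IsC21 g) (h0 : ∀ x t, g x t ≠ 0) : IsC21 fun x t => Real.log (g x t) :=
  comp (fun x t => Real.contDiffAt_log.2 (h0 x t)) hg

end IsC21

section AdvectionDiffusion

variable {d : ℕ} {ε : ℝ} {v : Fin d → ℝ} {g h : (Fin d → ℝ) → ℝ → ℝ} {φ : ℝ → ℝ}
  {x : Fin d → ℝ} {t : ℝ}

theorem advDiff_add (hg : IsC21 g) (hh : IsC21 h) :
    advDiff ε v (fun y τ => g y τ + h y τ) x t = advDiff ε v g x t + advDiff ε v h x t := by
  have hspd := spd_add (hg.differentiable_space t x) (hh.differentiable_space t x)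
  simp only [advDiff, hspd, slap_add (hg.space t) (hh.space t), mul_add, Finset.sum_add_distrib,
    deriv_fun_add (hg.differentiable_time x t) (hh.differentiable_time x t)]
  ring

theorem advDiff_sum {ι : Type*} {s : Finset ι} {g : ι → (Fin d → ℝ) → ℝ → ℝ}
    (hg : ∀ k ∈ s, IsC21 (g k)) :
    advDiff ε v (fun y τ => ∑ k ∈ s, g k y τ) x t = ∑ k ∈ s, advDiff ε v (g k) x t := by
  have hspd := spd_sum fun k hk => (hg k hk).differentiable_space t x
  simp only [advDiff, hspd, slap_sum fun k hk => (hg k hk).space t,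
    deriv_fun_sum fun k hk => (hg k hk).differentiable_time x t, Finset.sum_sub_distrib,
    Finset.sum_add_distrib, Finset.mul_sum]
  rw [Finset.sum_comm]

theorem advDiff_mul (hg : IsC21 g) (hh : IsC21 h) :
    advDiff ε v (fun y τ => g y τ * h y τ) x t =
      g x t * advDiff ε v h x t + h x t * advDiff ε v g x t
        - 2 * ε * gradInner (fun y => g y t) (fun y => h y t) x := by
  have hspd := spd_mul (hg.differentiable_space t x) (hh.differentiable_space t x)
  have hadv : ∑ j, v j * spd (fun y => g y t * h y t) j x =
      g x t * ∑ j, v j * spd (fun y => h y t) j x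
        + h x t * ∑ j, v j * spd (fun y => g y t) j x := by
    simp only [hspd, Finset.mul_sum, ← Finset.sum_add_distrib]
    exact Finset.sum_congr rfl fun j _ => by ring
  rw [advDiff, hadv, slap_mul (hg.space t) (hh.space t),
    deriv_fun_mul (hg.differentiable_time x t) (hh.differentiable_time x t), advDiff, advDiff]
  ring

theorem advDiff_const (c : ℝ) : advDiff ε v (fun _ _ => c) x t = 0 := by
  have hspd (i : Fin d) : spd (fun _ => c) i = fun _ => 0 := funext fun _ => spd_const c i
  simp [advDiff, slap, hspd, spd_const]

theorem advDiff_const_mul (c : ℝ) (hg : IsC21 g) :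
    advDiff ε v (fun y τ => c * g y τ) x t = c * advDiff ε v g x t := by
  simp [advDiff_mul (.const c) hg, advDiff_const, gradInner, spd_const]

theorem advDiff_comp (hφ : ∀ y τ, ContDiffAt ℝ 2 φ (g y τ)) (hg : IsC21 g) :
    advDiff ε v (fun y τ => φ (g y τ)) x t =
      deriv φ (g x t) * advDiff ε v g x t
        - ε * deriv (deriv φ) (g x t) * gradInner (fun y => g y t) (fun y => g y t) x := by
  have dφ := (hφ x t).differentiableAt two_ne_zero
  have hspd := spd_comp dφ (hg.differentiable_space t x)
  have htime : deriv (fun τ => φ (g x τ)) t = deriv φ (g x t) * deriv (fun τ => g x τ) t :=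
    deriv_comp t dφ (hg.differentiable_time x t)
  have hadv : ∑ j, v j * spd (fun y => φ (g y t)) j x =
      deriv φ (g x t) * ∑ j, v j * spd (fun y => g y t) j x := by
    simp only [hspd, Finset.mul_sum]
    exact Finset.sum_congr rfl fun j _ => by ring
  rw [advDiff, htime, hadv, slap_comp (fun y => hφ y t) (hg.space t), advDiff]
  ring

theorem advDiff_log (hg : IsC21 g) (h0 : ∀ y τ, g y τ ≠ 0) :
    advDiff ε v (fun y τ => Real.log (g y τ)) x t =
      advDiff ε v g x t / g x t
        + ε * gradInner (fun y => Real.log (g y t)) (fun y => Real.log (g y t)) x := by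
  have hgrad : gradInner (fun y => Real.log (g y t)) (fun y => Real.log (g y t)) x =
      gradInner (fun y => g y t) (fun y => g y t) x / g x t ^ 2 := by
    have dg := hg.differentiable_space t x
    rw [gradInner_log_right dg (h0 x t), gradInner_comm, gradInner_log_right dg (h0 x t)]
    ring
  rw [advDiff_comp (fun y τ => Real.contDiffAt_log.2 (h0 y τ)) hg, hgrad, Real.deriv_log',
    deriv_inv]
  ring

/-- Stated with `advDiff (ρ * w)` on the right because the equations prescribe the momentum `ρ * w`,
not the velocity `w`. -/
theorem advDiff_mul_sq {ρ w : (Fin d → ℝ) → ℝ → ℝ} (hρ : IsC21 ρ) (hw : IsC21 w) :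
    advDiff ε v (fun y τ => ρ y τ * w y τ ^ 2) x t =
      2 * w x t * advDiff ε v (fun y τ => ρ y τ * w y τ) x t - w x t ^ 2 * advDiff ε v ρ x t
        - 2 * ε * ρ x t * gradInner (fun y => w y t) (fun y => w y t) x := by
  have hassoc : (fun y τ => ρ y τ * w y τ ^ 2) = fun y τ => ρ y τ * w y τ * w y τ := by
    funext y τ; ring
  rw [hassoc, advDiff_mul (hρ.mul hw) hw, advDiff_mul hρ hw,
    gradInner_mul_left (hρ.differentiable_space t x) (hw.differentiable_space t x)]
  ring

theorem advDiff_sq (hg : IsC21 g) :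
    advDiff ε v (fun y τ => g y τ ^ 2) x t =
      2 * g x t * advDiff ε v g x t - 2 * ε * gradInner (fun y => g y t) (fun y => g y t) x := by
  simpa [advDiff_const] using advDiff_mul_sq (ε := ε) (v := v) (x := x) (t := t) (.const 1) hg

theorem advDiff_add_mul_sdiv {u : (Fin d → ℝ) → ℝ → Fin d → ℝ} (hg : IsC21 g)
    (hu : ∀ j, DifferentiableAt ℝ (fun y => u y t j) x) :
    advDiff ε (u x t) g x t + g x t * sdiv (fun y => u y t) x =
      deriv (fun τ => g x τ) t + sdiv (fun y j => u y t j * g y t) x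
        - ε * slap (fun y => g y t) x := by
  rw [sdiv_mul (hg.differentiable_space t x) hu, advDiff]
  ring

end AdvectionDiffusion

/-- Specific entropy `s = ln e − (γ−1) ln ρ` of an ideal gas with adiabatic constant `γ`, as a
function of the density and specific internal energy fields; `sField γ ρ E m B` is by definition
`idealGasEntropy γ ρ (specE ρ E m B)`. -/
noncomputable def idealGasEntropy {d : ℕ} (γ : ℝ) (ρ e : (Fin d → ℝ) → ℝ → ℝ)
    (x : Fin d → ℝ) (t : ℝ) : ℝ :=
  Real.log (e x t) - (γ - 1) * Real.log (ρ x t)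

section IdealGas

variable {d : ℕ} {γ ε θ D : ℝ} {v : Fin d → ℝ} {ρ e : (Fin d → ℝ) → ℝ → ℝ} {f : ℝ → ℝ}
  {x : Fin d → ℝ} {t : ℝ}

theorem IsC21.idealGasEntropy (hρ : IsC21 ρ) (he : IsC21 e) (hρ0 : ∀ y τ, ρ y τ ≠ 0)
    (he0 : ∀ y τ, e y τ ≠ 0) : IsC21 (idealGasEntropy γ ρ e) :=
  (he.log he0).sub ((IsC21.const _).mul (hρ.log hρ0))

theorem spd_idealGasEntropy (hρ : DifferentiableAt ℝ (fun y => ρ y t) x)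
    (he : DifferentiableAt ℝ (fun y => e y t) x) (hρ0 : ρ x t ≠ 0) (he0 : e x t ≠ 0) (j : Fin d) :
    spd (fun y => idealGasEntropy γ ρ e y t) j x =
      spd (fun y => Real.log (e y t)) j x - (γ - 1) * spd (fun y => Real.log (ρ y t)) j x := by
  simp only [idealGasEntropy]
  rw [spd_sub (he.log he0) ((hρ.log hρ0).const_mul (γ - 1)), spd_const_mul _ (hρ.log hρ0)]

theorem gradInner_idealGasEntropy (hρ : DifferentiableAt ℝ (fun y => ρ y t) x)
    (he : DifferentiableAt ℝ (fun y => e y t) x) (hρ0 : ρ x t ≠ 0) (he0 : e x t ≠ 0)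
    (g : (Fin d → ℝ) → ℝ) :
    gradInner g (fun y => idealGasEntropy γ ρ e y t) x =
      gradInner g (fun y => Real.log (e y t)) x
        - (γ - 1) * gradInner g (fun y => Real.log (ρ y t)) x := by
  simp only [gradInner, spd_idealGasEntropy hρ he hρ0 he0, Finset.mul_sum,
    ← Finset.sum_sub_distrib]
  exact Finset.sum_congr rfl fun j _ => by ring

theorem advDiff_idealGasEntropy (hρ : IsC21 ρ) (he : IsC21 e) (hρ0 : ∀ y τ, ρ y τ ≠ 0)
    (he0 : ∀ y τ, e y τ ≠ 0) (hmass : advDiff ε v ρ x t = -(ρ x t * θ))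
    (henergy : ρ x t * advDiff ε v e x t =
      -((γ - 1) * ρ x t * e x t * θ)
        + ε * (D + 2 * gradInner (fun y => ρ y t) (fun y => e y t) x)) :
    ρ x t * advDiff ε v (idealGasEntropy γ ρ e) x t =
      ε * (D / e x t
        + ρ x t * (gradInner (fun y => Real.log (e y t)) (fun y => Real.log (e y t)) x
          - (γ - 1) * gradInner (fun y => Real.log (ρ y t)) (fun y => Real.log (ρ y t)) x)
        + 2 * gradInner (fun y => ρ y t) (fun y => Real.log (e y t)) x) := by
  have hsum : idealGasEntropy γ ρ e =
      fun y τ => Real.log (e y τ) + (1 - γ) * Real.log (ρ y τ) := by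
    funext y τ
    rw [idealGasEntropy]
    ring
  have hρe := gradInner_log_right (h := fun y => ρ y t) (he.differentiable_space t x) (he0 x t)
  rw [hsum, advDiff_add (he.log he0) ((IsC21.const _).mul (hρ.log hρ0)),
    advDiff_const_mul _ (hρ.log hρ0), advDiff_log he he0, advDiff_log hρ hρ0, hmass, hρe]
  have hρx := hρ0 x t
  have hex := he0 x t
  field_simp
  linear_combination henergy

/-- `D` is the viscous heating. The remaining term on the right is minus the Hessian of `ρ f(s)`, as
a function of `(ρ, ρe)`, applied to the gradients of `(ρ, ρe)`. -/
theorem advDiff_mul_comp_idealGasEntropy (hf : ContDiff ℝ 2 f) (hρ : IsC21 ρ) (he : IsC21 e)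
    (hρ0 : ∀ y τ, ρ y τ ≠ 0) (he0 : ∀ y τ, e y τ ≠ 0)
    (hmass : advDiff ε v ρ x t = -(ρ x t * θ))
    (henergy : ρ x t * advDiff ε v e x t =
      -((γ - 1) * ρ x t * e x t * θ)
        + ε * (D + 2 * gradInner (fun y => ρ y t) (fun y => e y t) x)) :
    advDiff ε v (fun y τ => ρ y τ * f (idealGasEntropy γ ρ e y τ)) x t
        + ρ x t * f (idealGasEntropy γ ρ e x t) * θ =
      ε * (deriv f (idealGasEntropy γ ρ e x t) * (D / e x t) + ρ x t *
        (deriv f (idealGasEntropy γ ρ e x t) *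
          (gradInner (fun y => Real.log (e y t)) (fun y => Real.log (e y t)) x
            + (γ - 1) * gradInner (fun y => Real.log (ρ y t)) (fun y => Real.log (ρ y t)) x)
          - deriv (deriv f) (idealGasEntropy γ ρ e x t) *
            gradInner (fun y => idealGasEntropy γ ρ e y t)
              (fun y => idealGasEntropy γ ρ e y t) x)) := by
  have hs : IsC21 (idealGasEntropy γ ρ e) := hρ.idealGasEntropy he hρ0 he0
  have hfs := IsC21.comp (fun _ _ => hf.contDiffAt) hs
  have hρs : gradInner (fun y => ρ y t) (fun y => f (idealGasEntropy γ ρ e y t)) x =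
      deriv f (idealGasEntropy γ ρ e x t) *
        (gradInner (fun y => ρ y t) (fun y => Real.log (e y t)) x - (γ - 1) * (ρ x t *
          gradInner (fun y => Real.log (ρ y t)) (fun y => Real.log (ρ y t)) x)) := by
    have dρ := hρ.differentiable_space t x
    have hlog := gradInner_log_right (h := fun y => Real.log (ρ y t)) dρ (hρ0 x t)
    rw [gradInner_comp_right (hf.differentiable two_ne_zero _) (hs.differentiable_space t x),
      gradInner_idealGasEntropy dρ (he.differentiable_space t x) (hρ0 x t) (he0 x t), hlog,
      gradInner_comm (g := fun y => Real.log _), mul_div_cancel₀ _ (hρ0 x t)]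
  rw [advDiff_mul hρ hfs, advDiff_comp (fun _ _ => hf.contDiffAt) hs, hρs, hmass]
  linear_combination deriv f (idealGasEntropy γ ρ e x t) *
    advDiff_idealGasEntropy hρ he hρ0 he0 hmass henergy

theorem entropy_hessian_nonneg {a b : ℝ} (hγ : 1 ≤ γ) (ha : 0 ≤ a) (hab : 0 ≤ a - γ * b)
    (X Y : ℝ) : 0 ≤ a * (Y ^ 2 + (γ - 1) * X ^ 2) - b * (Y - (γ - 1) * X) ^ 2 := by
  have hdecomp : γ * (a * (Y ^ 2 + (γ - 1) * X ^ 2) - b * (Y - (γ - 1) * X) ^ 2) =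
      (a - γ * b) * (Y - (γ - 1) * X) ^ 2 + a * (γ - 1) * (X + Y) ^ 2 := by ring
  have hsum : 0 ≤ (a - γ * b) * (Y - (γ - 1) * X) ^ 2 + a * (γ - 1) * (X + Y) ^ 2 :=
    add_nonneg (mul_nonneg hab (sq_nonneg _))
      (mul_nonneg (mul_nonneg ha (sub_nonneg.2 hγ)) (sq_nonneg _))
  exact nonneg_of_mul_nonneg_right (hdecomp ▸ hsum) (zero_lt_one.trans_le hγ)

theorem gradInner_entropy_nonneg {a b : ℝ} (hγ : 1 ≤ γ) (ha : 0 ≤ a) (hab : 0 ≤ a - γ * b)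
    (hρ : DifferentiableAt ℝ (fun y => ρ y t) x)
    (he : DifferentiableAt ℝ (fun y => e y t) x) (hρ0 : ρ x t ≠ 0) (he0 : e x t ≠ 0) :
    0 ≤ a * (gradInner (fun y => Real.log (e y t)) (fun y => Real.log (e y t)) x
          + (γ - 1) * gradInner (fun y => Real.log (ρ y t)) (fun y => Real.log (ρ y t)) x)
        - b * gradInner (fun y => idealGasEntropy γ ρ e y t)
            (fun y => idealGasEntropy γ ρ e y t) x := by
  simp only [gradInner, spd_idealGasEntropy hρ he hρ0 he0, Finset.mul_sum,
    ← Finset.sum_add_distrib, ← Finset.sum_sub_distrib, ← pow_two]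
  exact Finset.sum_nonneg fun j _ => entropy_hessian_nonneg hγ ha hab _ _

theorem advDiff_mul_comp_idealGasEntropy_nonneg (hγ : 1 ≤ γ) (hε : 0 ≤ ε) (hf : ContDiff ℝ 2 f)
    (hf' : 0 ≤ deriv f (idealGasEntropy γ ρ e x t))
    (hf'' : 0 ≤ deriv f (idealGasEntropy γ ρ e x t)
      - γ * deriv (deriv f) (idealGasEntropy γ ρ e x t))
    (hρ : IsC21 ρ) (he : IsC21 e) (hρpos : ∀ y τ, 0 < ρ y τ) (hepos : ∀ y τ, 0 < e y τ)
    (hD : 0 ≤ D) (hmass : advDiff ε v ρ x t = -(ρ x t * θ))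
    (henergy : ρ x t * advDiff ε v e x t =
      -((γ - 1) * ρ x t * e x t * θ)
        + ε * (D + 2 * gradInner (fun y => ρ y t) (fun y => e y t) x)) :
    0 ≤ advDiff ε v (fun y τ => ρ y τ * f (idealGasEntropy γ ρ e y τ)) x t
      + ρ x t * f (idealGasEntropy γ ρ e x t) * θ := by
  have hρ0 := fun y τ => (hρpos y τ).ne'
  have he0 := fun y τ => (hepos y τ).ne'
  rw [advDiff_mul_comp_idealGasEntropy hf hρ he hρ0 he0 hmass henergy]
  have hheat := mul_nonneg hf' (div_nonneg hD (hepos x t).le)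
  have hdiffusion := gradInner_entropy_nonneg hγ hf' hf'' (hρ.differentiable_space t x)
    (he.differentiable_space t x) (hρ0 x t) (he0 x t)
  exact mul_nonneg hε (add_nonneg hheat (mul_nonneg (hρpos x t).le hdiffusion))

end IdealGas

/-- The velocity field `u = m/ρ`. -/
noncomputable def velocity {d : ℕ} (ρ : (Fin d → ℝ) → ℝ → ℝ) (m : (Fin d → ℝ) → ℝ → Fin d → ℝ)
    (x : Fin d → ℝ) (t : ℝ) (i : Fin d) : ℝ :=
  m x t i / ρ x t

/-- A classical solution of the monolithic-regularized ideal MHD system on `ℝ^d × (0, ∞)` with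
viscosity `ε`, density `ρ`, total energy `E`, momentum `m` and magnetic field `B`. The pressure
field `p` is not tied to an equation of state. -/
structure IsRegularizedMHD {d : ℕ} (ε : ℝ) (ρ E p : (Fin d → ℝ) → ℝ → ℝ)
    (m B : (Fin d → ℝ) → ℝ → Fin d → ℝ) : Prop where
  density_ne_zero : ∀ x t, ρ x t ≠ 0
  density_isC21 : IsC21 ρ
  momentum_isC21 : ∀ i, IsC21 fun x t => m x t i
  energy_isC21 : IsC21 E
  magnetic_isC21 : ∀ i, IsC21 fun x t => B x t i
  pressure_differentiable : ∀ t, Differentiable ℝ fun x => p x t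
  sdiv_magnetic : ∀ x t, 0 < t → sdiv (fun y => B y t) x = 0
  mass : ∀ x t, 0 < t →
    deriv (fun τ => ρ x τ) t + sdiv (fun y => m y t) x = ε * slap (fun y => ρ y t) x
  momentum : ∀ x t, 0 < t → ∀ i,
    deriv (fun τ => m x τ i) t
      + sdiv (fun y j => m y t i * velocity ρ m y t j
        + (if i = j then p y t else 0) - maxwellT (B y t) i j) x
      = ε * slap (fun y => m y t i) x
  energy : ∀ x t, 0 < t →
    deriv (fun τ => E x τ) t
      + sdiv (fun y j => velocity ρ m y t j * (E y t + p y t)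
        - ∑ k, velocity ρ m y t k * maxwellT (B y t) k j) x
      = ε * slap (fun y => E y t) x
  induction : ∀ x t, 0 < t → ∀ i,
    deriv (fun τ => B x τ i) t
      + sdiv (fun y j => velocity ρ m y t j * B y t i - B y t j * velocity ρ m y t i) x
      = ε * slap (fun y => B y t i) x

/-- The total MHD stress `pI − 𝒯`, which accounts for the whole non-convective part of both the
momentum flux `m ⊗ u + (pI − 𝒯)` and the energy flux `E u + (pI − 𝒯)u`. -/
noncomputable def mhdStress {d : ℕ} (p : ℝ) (B : Fin d → ℝ) (i j : Fin d) : ℝ :=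
  (if i = j then p else 0) - maxwellT B i j

theorem sum_mul_mhdStress {d : ℕ} (p : ℝ) (B u : Fin d → ℝ) (j : Fin d) :
    ∑ k, u k * mhdStress p B k j = u j * p - ∑ k, u k * maxwellT B k j := by
  simp only [mhdStress, mul_sub, mul_ite, mul_zero, Finset.sum_sub_distrib, Finset.sum_ite_eq',
    Finset.mem_univ, if_true]

theorem sum_mhdStress_mul {d : ℕ} (p : ℝ) (B : Fin d → ℝ) (A : Fin d → Fin d → ℝ) :
    ∑ k, ∑ j, mhdStress p B k j * A k j =
      (p + (∑ k, B k ^ 2) / 2) * ∑ k, A k k - ∑ k, B k * ∑ j, B j * A k j := by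
  have hrow (k : Fin d) : ∑ j, mhdStress p B k j * A k j =
      (p + (∑ k, B k ^ 2) / 2) * A k k - B k * ∑ j, B j * A k j := by
    simp only [mhdStress, maxwellT, sub_mul, ite_mul, zero_mul, Finset.sum_sub_distrib,
      Finset.sum_ite_eq, Finset.mem_univ, if_true, mul_assoc, ← Finset.mul_sum]
    ring
  simp only [hrow, Finset.sum_sub_distrib, ← Finset.mul_sum]

section EnergyDecomposition

variable {d : ℕ} {ε : ℝ} {v : Fin d → ℝ} {ρ E e : (Fin d → ℝ) → ℝ → ℝ}
  {m u B : (Fin d → ℝ) → ℝ → Fin d → ℝ} {x : Fin d → ℝ} {t : ℝ}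

theorem isC21_velocity (hρ : IsC21 ρ) (hm : ∀ i, IsC21 fun x t => m x t i)
    (hρ0 : ∀ y τ, ρ y τ ≠ 0) (i : Fin d) : IsC21 fun x t => velocity ρ m x t i :=
  (hm i).div hρ hρ0

theorem isC21_specE (hρ : IsC21 ρ) (hE : IsC21 E) (hm : ∀ i, IsC21 fun x t => m x t i)
    (hB : ∀ i, IsC21 fun x t => B x t i) (hρ0 : ∀ y τ, ρ y τ ≠ 0) : IsC21 (specE ρ E m B) :=
  have hu := isC21_velocity hρ hm hρ0
  have hkinetic := hρ.mul (.sum fun i _ => (hu i).pow 2)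
  have hmagnetic := IsC21.sum fun i _ => (hB i).pow 2
  have half_ne_zero (_ : Fin d → ℝ) (_ : ℝ) : (2 : ℝ) ≠ 0 := two_ne_zero
  ((hE.sub (hkinetic.div (.const 2) half_ne_zero)).sub (hmagnetic.div (.const 2) half_ne_zero)).div
    hρ hρ0

theorem density_mul_velocity (hρ0 : ρ x t ≠ 0) (i : Fin d) :
    ρ x t * velocity ρ m x t i = m x t i :=
  mul_div_cancel₀ _ hρ0

theorem totalEnergy_eq (hρ0 : ρ x t ≠ 0) :
    E x t = ρ x t * specE ρ E m B x t
      + 2⁻¹ * ∑ i, (ρ x t * velocity ρ m x t i ^ 2 + B x t i ^ 2) := by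
  simp only [specE, velocity, Finset.sum_add_distrib, ← Finset.mul_sum]
  field_simp
  ring

/-- The heating terms `ρ|∇u|² + |∇B|²` arise as the defect in the chain rule of `∂ₜ + v·∇ − εΔ` for
the kinetic and magnetic energies. -/
theorem advDiff_totalEnergy (hρ : IsC21 ρ) (he : IsC21 e) (hu : ∀ i, IsC21 fun x t => u x t i)
    (hB : ∀ i, IsC21 fun x t => B x t i) :
    advDiff ε v (fun y τ => ρ y τ * e y τ + 2⁻¹ * ∑ i, (ρ y τ * u y τ i ^ 2 + B y τ i ^ 2)) x t =
      advDiff ε v (fun y τ => ρ y τ * e y τ) x t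
        + ∑ i, u x t i * advDiff ε v (fun y τ => ρ y τ * u y τ i) x t
        - (∑ i, u x t i ^ 2) / 2 * advDiff ε v ρ x t
        + ∑ i, B x t i * advDiff ε v (fun y τ => B y τ i) x t
        - ε * ∑ i, (ρ x t * gradInner (fun y => u y t i) (fun y => u y t i) x
          + gradInner (fun y => B y t i) (fun y => B y t i) x) := by
  have hterm (i : Fin d) : IsC21 fun y τ => ρ y τ * u y τ i ^ 2 + B y τ i ^ 2 :=
    (hρ.mul ((hu i).pow 2)).add ((hB i).pow 2)
  rw [advDiff_add (hρ.mul he) ((IsC21.const _).mul (.sum fun i _ => hterm i)),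
    advDiff_const_mul _ (.sum fun i _ => hterm i), advDiff_sum fun i _ => hterm i]
  simp only [advDiff_add (hρ.mul ((hu _).pow 2)) ((hB _).pow 2), advDiff_mul_sq hρ (hu _),
    advDiff_sq (hB _), Finset.mul_sum, Finset.sum_mul, Finset.sum_div, add_sub_assoc, add_assoc,
    add_right_inj, ← Finset.sum_add_distrib, ← Finset.sum_sub_distrib]
  exact Finset.sum_congr rfl fun i _ => by ring

end EnergyDecomposition

namespace IsRegularizedMHD

variable {d : ℕ} {ε : ℝ} {ρ E p : (Fin d → ℝ) → ℝ → ℝ} {m B : (Fin d → ℝ) → ℝ → Fin d → ℝ}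
  {x : Fin d → ℝ} {t : ℝ}

theorem velocity_isC21 (h : IsRegularizedMHD ε ρ E p m B) (i : Fin d) :
    IsC21 fun x t => velocity ρ m x t i :=
  isC21_velocity h.density_isC21 h.momentum_isC21 h.density_ne_zero i

theorem differentiable_velocity (h : IsRegularizedMHD ε ρ E p m B) (t : ℝ) (i : Fin d) :
    Differentiable ℝ fun x => velocity ρ m x t i :=
  (h.velocity_isC21 i).differentiable_space t

theorem specE_isC21 (h : IsRegularizedMHD ε ρ E p m B) : IsC21 (specE ρ E m B) :=
  isC21_specE h.density_isC21 h.energy_isC21 h.momentum_isC21 h.magnetic_isC21 h.density_ne_zero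

theorem differentiable_mhdStress (h : IsRegularizedMHD ε ρ E p m B) (t : ℝ) (i j : Fin d) :
    Differentiable ℝ fun y => mhdStress (p y t) (B y t) i j := by
  have hp := h.pressure_differentiable t
  have hB (k : Fin d) := (h.magnetic_isC21 k).differentiable_space t
  unfold mhdStress maxwellT
  split_ifs <;> fun_prop

theorem advDiff_density (h : IsRegularizedMHD ε ρ E p m B) (ht : 0 < t) :
    advDiff ε (velocity ρ m x t) ρ x t = -(ρ x t * sdiv (fun y => velocity ρ m y t) x) := by
  have hflux : (fun y j => velocity ρ m y t j * ρ y t) = fun y => m y t := by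
    funext y j
    rw [mul_comm, density_mul_velocity (h.density_ne_zero y t)]
  have hcons := advDiff_add_mul_sdiv (ε := ε) h.density_isC21
    fun j => h.differentiable_velocity t j x
  rw [hflux] at hcons
  linear_combination hcons + h.mass x t ht

theorem advDiff_momentum (h : IsRegularizedMHD ε ρ E p m B) (ht : 0 < t) (i : Fin d) :
    advDiff ε (velocity ρ m x t) (fun y τ => m y τ i) x t =
      -(m x t i * sdiv (fun y => velocity ρ m y t) x
        + sdiv (fun y => mhdStress (p y t) (B y t) i) x) := by
  have du (j : Fin d) := h.differentiable_velocity t j x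
  have dm := (h.momentum_isC21 i).differentiable_space t x
  have hsplit := sdiv_add (fun j => (du j).fun_mul dm) fun j => h.differentiable_mhdStress t i j x
  have hcons := h.momentum x t ht i
  simp only [mul_comm (m _ t i), add_sub_assoc] at hcons
  unfold mhdStress at hsplit ⊢
  linear_combination advDiff_add_mul_sdiv (ε := ε) (h.momentum_isC21 i) du + hcons - hsplit

theorem advDiff_energy (h : IsRegularizedMHD ε ρ E p m B) (ht : 0 < t) :
    advDiff ε (velocity ρ m x t) E x t =
      -(E x t * sdiv (fun y => velocity ρ m y t) x
        + ∑ k, (velocity ρ m x t k * sdiv (fun y => mhdStress (p y t) (B y t) k) x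
          + ∑ j, mhdStress (p x t) (B x t) k j * spd (fun y => velocity ρ m y t k) j x)) := by
  have du (j : Fin d) := h.differentiable_velocity t j x
  have dE := h.energy_isC21.differentiable_space t x
  have dS (k j : Fin d) := h.differentiable_mhdStress t k j x
  have hsplit := sdiv_add (fun j => (du j).fun_mul dE)
    fun j => DifferentiableAt.fun_sum fun k (_ : k ∈ Finset.univ) => (du k).fun_mul (dS k j)
  have hcons := h.energy x t ht
  simp only [mul_add, add_sub_assoc, ← sum_mul_mhdStress] at hcons
  linear_combination advDiff_add_mul_sdiv (ε := ε) h.energy_isC21 du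
    + hcons - hsplit - sdiv_vecMul du dS

theorem advDiff_magnetic (h : IsRegularizedMHD ε ρ E p m B) (ht : 0 < t) (i : Fin d) :
    advDiff ε (velocity ρ m x t) (fun y τ => B y τ i) x t =
      -(B x t i * sdiv (fun y => velocity ρ m y t) x)
        + ∑ j, B x t j * spd (fun y => velocity ρ m y t i) j x := by
  have du (j : Fin d) := h.differentiable_velocity t j x
  have dB (j : Fin d) := (h.magnetic_isC21 j).differentiable_space t x
  have hsplit := sdiv_sub (fun j => (du j).fun_mul (dB i)) fun j => (dB j).fun_mul (du i)
  linear_combination advDiff_add_mul_sdiv (ε := ε) (h.magnetic_isC21 i) du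
    + h.induction x t ht i - hsplit + sdiv_mul (du i) dB
    + velocity ρ m x t i * h.sdiv_magnetic x t ht

theorem sum_velocity_mul_advDiff_momentum (h : IsRegularizedMHD ε ρ E p m B) (ht : 0 < t) :
    ∑ i, velocity ρ m x t i * advDiff ε (velocity ρ m x t) (fun y τ => m y τ i) x t =
      -(ρ x t * (∑ i, velocity ρ m x t i ^ 2) * sdiv (fun y => velocity ρ m y t) x
        + ∑ i, velocity ρ m x t i * sdiv (fun y => mhdStress (p y t) (B y t) i) x) := by
  simp only [h.advDiff_momentum ht, Finset.mul_sum, Finset.sum_mul, ← Finset.sum_add_distrib,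
    ← Finset.sum_neg_distrib]
  refine Finset.sum_congr rfl fun i _ => ?_
  rw [← density_mul_velocity (m := m) (h.density_ne_zero x t) i]
  ring

theorem sum_magnetic_mul_advDiff_magnetic (h : IsRegularizedMHD ε ρ E p m B) (ht : 0 < t) :
    ∑ i, B x t i * advDiff ε (velocity ρ m x t) (fun y τ => B y τ i) x t =
      -((∑ i, B x t i ^ 2) * sdiv (fun y => velocity ρ m y t) x)
        + ∑ i, B x t i * ∑ j, B x t j * spd (fun y => velocity ρ m y t i) j x := by
  simp only [h.advDiff_magnetic ht, mul_add, Finset.sum_add_distrib, Finset.sum_mul,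
    ← Finset.sum_neg_distrib, add_left_inj]
  exact Finset.sum_congr rfl fun i _ => by ring

/-- Subtracting the kinetic and magnetic energies cancels the work `u · ∇·(pI − 𝒯)` of the stress
and, by the induction equation, the work `𝒯 : ∇u` of the Maxwell stress. -/
theorem advDiff_specE (h : IsRegularizedMHD ε ρ E p m B) (ht : 0 < t) :
    ρ x t * advDiff ε (velocity ρ m x t) (specE ρ E m B) x t =
      -(p x t * sdiv (fun y => velocity ρ m y t) x)
        + ε * (∑ i, (ρ x t * gradInner (fun y => velocity ρ m y t i)
              (fun y => velocity ρ m y t i) x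
            + gradInner (fun y => B y t i) (fun y => B y t i) x)
          + 2 * gradInner (fun y => ρ y t) (fun y => specE ρ E m B y t) x) := by
  have hE := advDiff_totalEnergy (ε := ε) (v := velocity ρ m x t) (x := x) (t := t)
    h.density_isC21 h.specE_isC21 h.velocity_isC21 h.magnetic_isC21
  simp only [← totalEnergy_eq (h.density_ne_zero _ _),
    density_mul_velocity (h.density_ne_zero _ _)] at hE
  have henergy := h.advDiff_energy (x := x) ht
  have hstress := sum_mhdStress_mul (p x t) (B x t) fun k j => spd (fun y => velocity ρ m y t k) j x
  have htrace : ∑ k, spd (fun y => velocity ρ m y t k) k x =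
    sdiv (fun y => velocity ρ m y t) x := rfl
  have htotal := totalEnergy_eq (E := E) (m := m) (B := B) (h.density_ne_zero x t)
  rw [Finset.sum_add_distrib, hstress, htrace] at henergy
  rw [Finset.sum_add_distrib, ← Finset.mul_sum] at htotal
  rw [advDiff_mul h.density_isC21 h.specE_isC21, h.advDiff_density ht,
    h.sum_velocity_mul_advDiff_momentum ht, h.sum_magnetic_mul_advDiff_magnetic ht, henergy] at hE
  linear_combination -hE - sdiv (fun y => velocity ρ m y t) x * htotal

theorem advDiff_entropy_nonneg {γ : ℝ} {f : ℝ → ℝ} (h : IsRegularizedMHD ε ρ E p m B)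
    (ht : 0 < t) (hγ : 1 ≤ γ) (hε : 0 ≤ ε) (hf : ContDiff ℝ 2 f) (hf' : ∀ y, 0 ≤ deriv f y)
    (hf'' : ∀ y, 0 ≤ deriv f y - γ * deriv (deriv f) y) (hρpos : ∀ y τ, 0 < ρ y τ)
    (hepos : ∀ y τ, 0 < specE ρ E m B y τ)
    (hp : p x t = (γ - 1) * ρ x t * specE ρ E m B x t) :
    0 ≤ advDiff ε (velocity ρ m x t) (fun y τ => ρ y τ * f (sField γ ρ E m B y τ)) x t
      + ρ x t * f (sField γ ρ E m B x t) * sdiv (fun y => velocity ρ m y t) x :=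
  have hheating : 0 ≤ ∑ i, (ρ x t * gradInner (fun y => velocity ρ m y t i)
      (fun y => velocity ρ m y t i) x + gradInner (fun y => B y t i) (fun y => B y t i) x) :=
    Finset.sum_nonneg fun _ _ =>
      add_nonneg (mul_nonneg (hρpos x t).le gradInner_self_nonneg) gradInner_self_nonneg
  advDiff_mul_comp_idealGasEntropy_nonneg hγ hε hf (hf' _) (hf'' _) h.density_isC21 h.specE_isC21
    hρpos hepos hheating (h.advDiff_density ht) (hp ▸ h.advDiff_specE ht)

end IsRegularizedMHD

/-- generalized entropy inequality. For smooth solutions of the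
monolithic-regularized ideal MHD system with ideal-gas pressure `p = (γ−1)ρe`,
`∇·B = 0`, `ρ > 0`, `e > 0`, and `f` with `f' > 0`, `f' − γ f'' > 0`, the generalized
entropy `ρ f(s)` satisfies
`∂ₜ(ρ f(s)) + ∇·(uρ f(s) − ερ∇f(s) − ε f(s)∇ρ) ≥ 0` at every point. -/
theorem stmt_18 {d : ℕ} (hd : 1 ≤ d) (γ ε : ℝ) (hγ : 1 < γ) (hε : 0 < ε)
    (ρ E p : (Fin d → ℝ) → ℝ → ℝ) (m B : (Fin d → ℝ) → ℝ → Fin d → ℝ)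
    (f : ℝ → ℝ) (hf : ContDiff ℝ 2 f)
    (hf' : ∀ y : ℝ, 0 < deriv f y)
    (hf'' : ∀ y : ℝ, 0 < deriv f y - γ * deriv (deriv f) y)
    (hρpos : ∀ x t, 0 < ρ x t)
    (hepos : ∀ x t, 0 < specE ρ E m B x t)
    (hp : ∀ x t, p x t = (γ - 1) * ρ x t * specE ρ E m B x t)
    (hρx : ∀ t, ContDiff ℝ 2 fun x => ρ x t) (hρt : ∀ x, ContDiff ℝ 1 fun t => ρ x t)
    (hmx : ∀ t i, ContDiff ℝ 2 fun x => m x t i) (hmt : ∀ x i, ContDiff ℝ 1 fun t => m x t i)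
    (hEx : ∀ t, ContDiff ℝ 2 fun x => E x t) (hEt : ∀ x, ContDiff ℝ 1 fun t => E x t)
    (hBx : ∀ t i, ContDiff ℝ 2 fun x => B x t i) (hBt : ∀ x i, ContDiff ℝ 1 fun t => B x t i)
    (hdivB : ∀ (x : Fin d → ℝ) (t : ℝ), 0 < t → (∑ j, spd (fun y => B y t j) j x) = 0)
    (hmass : ∀ (x : Fin d → ℝ) (t : ℝ), 0 < t →
      deriv (fun τ => ρ x τ) t + (∑ j, spd (fun y => m y t j) j x)
        = ε * slap (fun y => ρ y t) x)
    (hmom : ∀ (x : Fin d → ℝ) (t : ℝ), 0 < t → ∀ i,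
      deriv (fun τ => m x τ i) t
        + (∑ j, spd (fun y => m y t i * (m y t j / ρ y t)
            + (if i = j then p y t else 0) - maxwellT (B y t) i j) j x)
        = ε * slap (fun y => m y t i) x)
    (hener : ∀ (x : Fin d → ℝ) (t : ℝ), 0 < t →
      deriv (fun τ => E x τ) t
        + (∑ j, spd (fun y => (m y t j / ρ y t) * (E y t + p y t)
            - ∑ k, (m y t k / ρ y t) * maxwellT (B y t) k j) j x)
        = ε * slap (fun y => E y t) x)
    (hind : ∀ (x : Fin d → ℝ) (t : ℝ), 0 < t → ∀ i,
      deriv (fun τ => B x τ i) t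
        + (∑ j, spd (fun y => (m y t j / ρ y t) * B y t i - B y t j * (m y t i / ρ y t)) j x)
        = ε * slap (fun y => B y t i) x) :
    ∀ (x : Fin d → ℝ) (t : ℝ), 0 < t →
      deriv (fun τ => ρ x τ * f (sField γ ρ E m B x τ)) t
        + (∑ j, spd (fun y =>
            (m y t j / ρ y t) * (ρ y t * f (sField γ ρ E m B y t))
            - ε * ρ y t * spd (fun z => f (sField γ ρ E m B z t)) j y
            - ε * f (sField γ ρ E m B y t) * spd (fun z => ρ z t) j y) j x) ≥ 0 := by
  have hρ : IsC21 ρ := ⟨hρx, hρt⟩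
  have hm (i : Fin d) : IsC21 fun x t => m x t i := ⟨fun t => hmx t i, fun x => hmt x i⟩
  have hB (i : Fin d) : IsC21 fun x t => B x t i := ⟨fun t => hBx t i, fun x => hBt x i⟩
  have hρ0 (x t) : ρ x t ≠ 0 := (hρpos x t).ne'
  have he : IsC21 (specE ρ E m B) := isC21_specE hρ ⟨hEx, hEt⟩ hm hB hρ0
  have dp (t) : Differentiable ℝ fun x => p x t := by
    simpa only [hp] using
      ((hρ.differentiable_space t).const_mul (γ - 1)).fun_mul (he.differentiable_space t)
  have hsol : IsRegularizedMHD ε ρ E p m B :=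
    ⟨hρ0, hρ, hm, ⟨hEx, hEt⟩, hB, dp, hdivB, hmass, hmom, hener, hind⟩
  have hfs : IsC21 fun x t => f (sField γ ρ E m B x t) :=
    .comp (fun _ _ => hf.contDiffAt) (hρ.idealGasEntropy he hρ0 fun x t => (hepos x t).ne')
  intro x t ht
  have du (j : Fin d) := hsol.differentiable_velocity t j x
  have dη := (hρ.mul hfs).differentiable_space t x
  have hflux := sdiv_sub_spd_mul ε (fun j => (du j).fun_mul dη) (hρ.space t) (hfs.space t)
  have hbalance := advDiff_add_mul_sdiv (ε := ε) (hρ.mul hfs) du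
  have hproduction := hsol.advDiff_entropy_nonneg (x := x) ht hγ.le hε.le hf (fun y => (hf' y).le)
    (fun y => (hf'' y).le) hρpos hepos (hp x t)
  rw [hbalance, add_sub_assoc, ← hflux] at hproduction
  exact hproduction
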